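/- Let (X₁, X₂) be bivariate normal with non-degenerate benchmark Y = α₁X₁ + α₂X₂. For any 0 ≤ a < b ≤ 1 and A = A(a,b), the conditional mean satisfies, for j = 1, 2: E[X_j | Y ∈ A] = μ_j + (Cov(Y, X_j)/σ(Y))·λ_{A,1}. -/

import Mathlib

open MeasureTheory ProbabilityTheory Filter Set

noncomputable section

/-- Covariance of two real random variables under the measure `m`. -/
def covar {Ω : Type*} [MeasurableSpace Ω] (m : Measure Ω) (f g : Ω → ℝ) : ℝ :=
  ∫ ω, (f ω - ∫ x, f x ∂m) * (g ω - ∫ x, g x ∂m) ∂m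

/-- Generalized inverse of the CDF of a measure on `ℝ`, `F⁻¹(p) = inf {y | F(y) ≥ p}`,
with values in `EReal` (`⊥` at `p = 0` and `⊤` at `p = 1` for fully supported laws). -/
def invCDF (μ : Measure ℝ) (p : ℝ) : EReal :=
  sInf ((fun x : ℝ => (x : EReal)) '' {x : ℝ | p ≤ cdf μ x})

/-- Quantile conditioning set `A(a,b) = {y : F⁻¹(a) < y < F⁻¹(b)}`. -/
def qSet (μ : Measure ℝ) (a b : ℝ) : Set ℝ :=
  {y : ℝ | invCDF μ a < (y : EReal) ∧ (y : EReal) < invCDF μ b}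

/-- `λ_{A,1} = E[V | V ∈ A_V]`, the first conditional moment of a standard normal on the
quantile set `A_V = (Φ⁻¹(a), Φ⁻¹(b))`. -/
def lambdaA1 (a b : ℝ) : ℝ :=
  ∫ x, x ∂((gaussianReal 0 1)[|qSet (gaussianReal 0 1) a b])

/-- `λ_{A,2} = E[V² | V ∈ A_V]`, the second conditional moment of a standard normal on the
quantile set `A_V = (Φ⁻¹(a), Φ⁻¹(b))`. -/
def lambdaA2 (a b : ℝ) : ℝ :=
  ∫ x, x ^ 2 ∂((gaussianReal 0 1)[|qSet (gaussianReal 0 1) a b])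

theorem invCDF_lt_coe_iff {μ : Measure ℝ} {p y : ℝ} :
    invCDF μ p < (y : EReal) ↔ ∃ x < y, p ≤ cdf μ x := by
  simp only [invCDF, sInf_lt_iff, exists_mem_image, mem_ofPred_eq, EReal.coe_lt_coe_iff]
  exact ⟨fun ⟨x, h, h'⟩ => ⟨x, h', h⟩, fun ⟨x, h, h'⟩ => ⟨x, h', h⟩⟩

theorem coe_lt_invCDF_iff {μ : Measure ℝ} {p y : ℝ} :
    (y : EReal) < invCDF μ p ↔ ∃ z > y, cdf μ z < p := by
  constructor
  · intro h
    obtain ⟨z, hyz, hz⟩ := EReal.lt_iff_exists_real_btwn.1 h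
    refine ⟨z, EReal.coe_lt_coe_iff.1 hyz, ?_⟩
    by_contra! hp
    exact hz.not_ge (sInf_le (mem_image_of_mem _ hp))
  · rintro ⟨z, hyz, hz⟩
    refine (EReal.coe_lt_coe_iff.2 hyz).trans_le (le_sInf ?_)
    rintro _ ⟨x, hx, rfl⟩
    exact EReal.coe_le_coe_iff.2 ((monotone_cdf μ).reflect_lt (hz.trans_le hx)).le

theorem mem_qSet_iff {μ : Measure ℝ} {a b y : ℝ} :
    y ∈ qSet μ a b ↔ (∃ x < y, a ≤ cdf μ x) ∧ ∃ z > y, cdf μ z < b :=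
  and_congr invCDF_lt_coe_iff coe_lt_invCDF_iff

theorem measurableSet_qSet (μ : Measure ℝ) (a b : ℝ) : MeasurableSet (qSet μ a b) :=
  (measurableSet_lt measurable_const measurable_coe_real_ereal).inter
    (measurableSet_lt measurable_coe_real_ereal measurable_const)

theorem continuous_cdf_of_nullSingleton (μ : Measure ℝ) [IsProbabilityMeasure μ]
    (hμ : ∀ x, μ {x} = 0) : Continuous (cdf μ) := by
  rw [continuous_iff_continuousAt]
  intro x
  rw [(monotone_cdf μ).continuousAt_iff_leftLim_eq_rightLim, StieltjesFunction.rightLim_eq]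
  have h := (cdf μ).measure_singleton x
  rw [measure_cdf, hμ x, eq_comm, ENNReal.ofReal_eq_zero] at h
  exact le_antisymm ((monotone_cdf μ).leftLim_le le_rfl) (by linarith)

theorem measure_qSet_ne_zero (μ : Measure ℝ) [IsProbabilityMeasure μ] (hμ : ∀ x, μ {x} = 0)
    (hvol : volume ≪ μ) {a b : ℝ} (ha : 0 ≤ a) (hab : a < b) (hb : b ≤ 1) :
    μ (qSet μ a b) ≠ 0 := by
  have hc := continuous_cdf_of_nullSingleton μ hμ
  have hopen : IsOpen (cdf μ ⁻¹' Ioo a b) := isOpen_Ioo.preimage hc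
  have hne : (cdf μ ⁻¹' Ioo a b).Nonempty := by
    obtain ⟨c, hac, hcb⟩ := exists_between hab
    obtain ⟨x, hx⟩ := ((tendsto_cdf_atBot μ).eventually_lt_const (ha.trans_lt hac)).exists
    obtain ⟨z, hz⟩ := ((tendsto_cdf_atTop μ).eventually_const_lt (hcb.trans_le hb)).exists
    obtain ⟨y, rfl⟩ := mem_range_of_exists_le_of_exists_ge hc ⟨x, hx.le⟩ ⟨z, hz.le⟩
    exact ⟨y, hac, hcb⟩
  have hsub : cdf μ ⁻¹' Ioo a b ⊆ qSet μ a b := by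
    intro y hy
    obtain ⟨l, u, hlu, hsub⟩ := mem_nhds_iff_exists_Ioo_subset.1 (hopen.mem_nhds hy)
    obtain ⟨x, hlx, hxy⟩ := exists_between hlu.1
    obtain ⟨z, hyz, hzu⟩ := exists_between hlu.2
    exact mem_qSet_iff.2 ⟨⟨x, hxy, (hsub ⟨hlx, hxy.trans hlu.2⟩).1.le⟩,
      ⟨z, hyz, (hsub ⟨hlu.1.trans hyz, hzu⟩).2⟩⟩
  exact fun h => (hopen.measure_pos volume hne).ne' (hvol (measure_mono_null hsub h))

theorem measure_qSet_gaussianReal_ne_zero (m : ℝ) {v : NNReal} (hv : v ≠ 0)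
    {a b : ℝ} (ha : 0 ≤ a) (hab : a < b) (hb : b ≤ 1) :
    gaussianReal m v (qSet (gaussianReal m v) a b) ≠ 0 :=
  measure_qSet_ne_zero _
    (fun _ => gaussianReal_absolutelyContinuous m hv Real.volume_singleton)
    (gaussianReal_absolutelyContinuous' m hv) ha hab hb

theorem integral_comp_cond_preimage {Ω E : Type*} [MeasurableSpace Ω] [MeasurableSpace E]
    {P : Measure Ω} {T : Ω → E} (hT : Measurable T) {A : Set E} (hA : MeasurableSet A)
    {f : E → ℝ} (hf : Measurable f) :
    ∫ ω, f (T ω) ∂P[|T ⁻¹' A] = ∫ x, f x ∂(P.map T)[|A] := by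
  simp only [ProbabilityTheory.cond, integral_smul_measure, Measure.map_apply hT hA]
  rw [setIntegral_map hA hf.aestronglyMeasurable hT.aemeasurable]

theorem cdf_map_affine (μ : Measure ℝ) [IsProbabilityMeasure μ] (m : ℝ) {s : ℝ} (hs : 0 < s)
    (x : ℝ) : cdf (μ.map fun t => m + s * t) (m + s * x) = cdf μ x := by
  have hT : Measurable fun t : ℝ => m + s * t := by fun_prop
  have := Measure.isProbabilityMeasure_map (μ := μ) hT.aemeasurable
  rw [cdf_eq_real, cdf_eq_real, map_measureReal_apply hT measurableSet_Iic]
  congr 1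
  ext t
  simp [hs]

theorem preimage_affine_qSet_map (μ : Measure ℝ) [IsProbabilityMeasure μ] (m : ℝ) {s : ℝ}
    (hs : 0 < s) (a b : ℝ) :
    (fun t => m + s * t) ⁻¹' qSet (μ.map fun t => m + s * t) a b = qSet μ a b := by
  have hsurj : Function.Surjective fun t : ℝ => m + s * t := fun y =>
    ⟨(y - m) / s, by field_simp; ring⟩
  ext y
  rw [mem_preimage, mem_qSet_iff, mem_qSet_iff]
  refine and_congr (hsurj.exists.trans ?_) (hsurj.exists.trans ?_) <;>
  simp only [cdf_map_affine μ m hs, gt_iff_lt, add_lt_add_iff_left, mul_lt_mul_iff_right₀ hs]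

theorem integral_cond_qSet_gaussianReal (m : ℝ) {s : ℝ} (hs : 0 < s) {a b : ℝ}
    (ha : 0 ≤ a) (hab : a < b) (hb : b ≤ 1) :
    ∫ y, y ∂(gaussianReal m (s ^ 2).toNNReal)[|qSet (gaussianReal m (s ^ 2).toNNReal) a b]
      = m + s * lambdaA1 a b := by
  have hmap : gaussianReal m (s ^ 2).toNNReal
      = (gaussianReal 0 1).map (fun t => m + s * t) := by
    have h := gaussianReal_map_const_add (μ := s * 0) (v := .mk (s ^ 2) (sq_nonneg s) * 1) m
    rw [← gaussianReal_map_const_mul, Measure.map_map (by fun_prop) (by fun_prop)] at h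
    simp only [Function.comp_def, mul_zero, zero_add, mul_one] at h
    rw [h, Real.toNNReal_of_nonneg (sq_nonneg s)]
  rw [hmap, ← integral_comp_cond_preimage (f := fun y => y) (by fun_prop)
    (measurableSet_qSet _ a b) measurable_id, preimage_affine_qSet_map _ m hs]
  have hpos := measure_qSet_gaussianReal_ne_zero 0 one_ne_zero ha hab hb
  have := cond_isProbabilityMeasure hpos
  have hint : Integrable (fun x : ℝ => x)
      ((gaussianReal 0 1)[|qSet (gaussianReal 0 1) a b]) :=
    (((memLp_id_gaussianReal (μ := 0) (v := 1) 1).integrable le_rfl).restrict).smul_measure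
      (ENNReal.inv_ne_top.2 hpos)
  rw [integral_add (integrable_const m) (hint.const_mul s), integral_const_mul, lambdaA1]
  simp

/-- Conditional expectations of a Gaussian coordinate given an event of the other coordinate are
obtained by linear regression. -/
theorem integral_cond_preimage_of_hasGaussianLaw {Ω : Type*} [MeasurableSpace Ω] {P : Measure Ω}
    {X Y : Ω → ℝ} (hXY : HasGaussianLaw (fun ω => (X ω, Y ω)) P) (hY : Measurable Y)
    (hX : Measurable X) (hVar : Var[Y; P] ≠ 0) {A : Set ℝ} (hA : MeasurableSet A)
    (hPA : P (Y ⁻¹' A) ≠ 0) :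
    ∫ ω, X ω ∂P[|Y ⁻¹' A]
      = P[X] + cov[Y, X; P] / Var[Y; P] * (∫ ω, Y ω ∂P[|Y ⁻¹' A] - P[Y]) := by
  have := hXY.isProbabilityMeasure
  have := cond_isProbabilityMeasure hPA
  set β := cov[Y, X; P] / Var[Y; P] with hβ
  have hX2 := hXY.fst.memLp_two
  have hY2 := hXY.snd.memLp_two
  have hXi := hXY.fst.integrable
  have hYi := hXY.snd.integrable
  have hcond {f : Ω → ℝ} (hf : Integrable f P) : Integrable f (P[|Y ⁻¹' A]) :=
    hf.restrict.smul_measure (ENNReal.inv_ne_top.2 hPA)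
  have hlaw : HasGaussianLaw (fun ω => (X ω - β * Y ω, Y ω)) P :=
    hXY.map_fun ((ContinuousLinearMap.fst ℝ ℝ ℝ - β • ContinuousLinearMap.snd ℝ ℝ ℝ).prod
      (ContinuousLinearMap.snd ℝ ℝ ℝ))
  have hcov : cov[fun ω => X ω - β * Y ω, Y; P] = 0 := by
    rw [covariance_fun_sub_left hX2 (hY2.const_mul β) hY2, covariance_const_mul_left,
      covariance_self hY.aemeasurable, covariance_comm, hβ, div_mul_cancel₀ _ hVar, sub_self]
  have hind := hlaw.indepFun_of_covariance_eq_zero hcov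
  have hres : ∫ ω, (X ω - β * Y ω) ∂P[|Y ⁻¹' A] = ∫ ω, (X ω - β * Y ω) ∂P := by
    have h := Indep.setIntegral_eq_mul (X := fun ω => X ω - β * Y ω) (f := fun x => x)
      hY.comap_le hind.symm (by fun_prop) ⟨A, hA, rfl⟩ (by fun_prop)
    rw [ProbabilityTheory.cond, integral_smul_measure, h, ENNReal.toReal_inv, smul_eq_mul, measureReal_def,
      inv_mul_cancel_left₀ (ENNReal.toReal_ne_zero.2 ⟨hPA, measure_ne_top _ _⟩)]
  rw [integral_sub hXi (hYi.const_mul β), integral_const_mul,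
    integral_sub (hcond hXi) ((hcond hYi).const_mul β), integral_const_mul] at hres
  linarith

theorem integral_cond_qSet_of_hasGaussianLaw {Ω : Type*} [MeasurableSpace Ω] {P : Measure Ω}
    {X Y : Ω → ℝ} (hXY : HasGaussianLaw (fun ω => (X ω, Y ω)) P) (hX : Measurable X)
    (hY : Measurable Y) (hVar : 0 < Var[Y; P]) {a b : ℝ} (ha : 0 ≤ a) (hab : a < b)
    (hb : b ≤ 1) :
    ∫ ω, X ω ∂P[|Y ⁻¹' qSet (P.map Y) a b]
      = P[X] + covar P Y X / √Var[Y; P] * lambdaA1 a b := by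
  have hs := Real.sqrt_pos.2 hVar
  have hmap := hXY.snd.map_eq_gaussianReal
  have hA := measurableSet_qSet (P.map Y) a b
  have hPA : P (Y ⁻¹' qSet (P.map Y) a b) ≠ 0 := by
    rw [← Measure.map_apply hY hA, hmap]
    exact measure_qSet_gaussianReal_ne_zero _ (Real.toNNReal_pos.2 hVar).ne' ha hab hb
  have hmean : ∫ ω, Y ω ∂P[|Y ⁻¹' qSet (P.map Y) a b]
      = P[Y] + √Var[Y; P] * lambdaA1 a b := by
    rw [integral_comp_cond_preimage (f := fun y => y) hY hA measurable_id, hmap]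
    have h := integral_cond_qSet_gaussianReal P[Y] hs ha hab hb
    rwa [Real.sq_sqrt hVar.le] at h
  rw [integral_cond_preimage_of_hasGaussianLaw hXY hY hX hVar.ne' hA hPA, hmean,
    show covar P Y X = cov[Y, X; P] from rfl]
  nth_rewrite 1 [← Real.sq_sqrt hVar.le]
  field_simp
  ring

theorem hasGaussianLaw_prodMk_of_linearCombination {Ω : Type*} [MeasurableSpace Ω]
    {P : Measure Ω} {X₁ X₂ : Ω → ℝ} (hX₁ : Measurable X₁) (hX₂ : Measurable X₂)
    (h : ∀ c₁ c₂ : ℝ, HasGaussianLaw (fun ω => c₁ * X₁ ω + c₂ * X₂ ω) P) :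
    HasGaussianLaw (fun ω => (X₁ ω, X₂ ω)) P where
  isGaussian_map := by
    refine ⟨fun L => ?_⟩
    have hX : Measurable fun ω => (X₁ ω, X₂ ω) := by fun_prop
    have hL : (L ∘ fun ω => (X₁ ω, X₂ ω))
        = fun ω => L (1, 0) * X₁ ω + L (0, 1) * X₂ ω := by
      ext ω
      have : (X₁ ω, X₂ ω) = X₁ ω • ((1, 0) : ℝ × ℝ) + X₂ ω • ((0, 1) : ℝ × ℝ) := by simp
      simp only [Function.comp_apply, this, map_add, map_smul, smul_eq_mul, mul_comm]
    rw [Measure.map_map (by fun_prop) hX, integral_map hX.aemeasurable (by fun_prop),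
      variance_map (by fun_prop) hX.aemeasurable]
    change _ = gaussianReal (∫ ω, (L ∘ fun ω => (X₁ ω, X₂ ω)) ω ∂P) _
    rw [hL]
    exact (h _ _).map_eq_gaussianReal

/-- For a bivariate normal `(X₁, X₂)` with non-degenerate benchmark
`Y = α₁X₁ + α₂X₂` and any `0 ≤ a < b ≤ 1` with `A = A(a,b)`:
`E[X_j | Y ∈ A] = μ_j + (Cov(Y, X_j)/σ(Y))·λ_{A,1}` for `j = 1, 2`. -/
theorem conditional_mean_bivariate_normal
    {Ω : Type*} [MeasureSpace Ω] [IsProbabilityMeasure (ℙ : Measure Ω)]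
    (X₁ X₂ : Ω → ℝ) (hX₁ : Measurable X₁) (hX₂ : Measurable X₂)
    (μ₁ μ₂ σ₁ σ₂ r ρ : ℝ) (hσ₁ : 0 < σ₁) (hσ₂ : 0 < σ₂)
    (hρ : ρ = r / (σ₁ * σ₂)) (hρmem : ρ ∈ Set.Ioo (-1 : ℝ) 1)
    (hGauss : ∀ c₁ c₂ : ℝ,
      (ℙ : Measure Ω).map (fun ω => c₁ * X₁ ω + c₂ * X₂ ω)
        = gaussianReal (c₁ * μ₁ + c₂ * μ₂)
            (Real.toNNReal (c₁ ^ 2 * σ₁ ^ 2 + 2 * c₁ * c₂ * r + c₂ ^ 2 * σ₂ ^ 2)))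
    (α₁ α₂ : ℝ) (hα : (α₁, α₂) ≠ (0, 0))
    (Y : Ω → ℝ) (hY : Y = fun ω => α₁ * X₁ ω + α₂ * X₂ ω)
    (hVarYpos : 0 < variance Y ℙ)
    (a b : ℝ) (ha : 0 ≤ a) (hab : a < b) (hb : b ≤ 1)
    (A : Set ℝ) (hA : A = qSet ((ℙ : Measure Ω).map Y) a b) :
    (∫ ω, X₁ ω ∂(ℙ[|Y ⁻¹' A])
        = μ₁ + covar ℙ Y X₁ / Real.sqrt (variance Y ℙ) * lambdaA1 a b)
    ∧ (∫ ω, X₂ ω ∂(ℙ[|Y ⁻¹' A])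
        = μ₂ + covar ℙ Y X₂ / Real.sqrt (variance Y ℙ) * lambdaA1 a b) := by
  have hcomb (c₁ c₂ : ℝ) : HasGaussianLaw (fun ω => c₁ * X₁ ω + c₂ * X₂ ω) ℙ :=
    ⟨by rw [hGauss c₁ c₂]; infer_instance⟩
  have hmean {X : Ω → ℝ} (hX : Measurable X) {m : ℝ} {v : NNReal}
      (h : (ℙ : Measure Ω).map X = gaussianReal m v) : ∫ ω, X ω = m := by
    rw [← integral_id_gaussianReal (μ := m) (v := v), ← h,
      integral_map hX.aemeasurable (by fun_prop)]
  have hm₁ : ∫ ω, X₁ ω = μ₁ := hmean hX₁ (by simpa using hGauss 1 0)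
  have hm₂ : ∫ ω, X₂ ω = μ₂ := hmean hX₂ (by simpa using hGauss 0 1)
  have hX := hasGaussianLaw_prodMk_of_linearCombination hX₁ hX₂ hcomb
  have hYm : Measurable Y := by rw [hY]; fun_prop
  let fst := ContinuousLinearMap.fst ℝ ℝ ℝ
  let snd := ContinuousLinearMap.snd ℝ ℝ ℝ
  have h₁ : HasGaussianLaw (fun ω => (X₁ ω, Y ω)) ℙ := by
    rw [hY]
    exact hX.map_fun (fst.prod (α₁ • fst + α₂ • snd))
  have h₂ : HasGaussianLaw (fun ω => (X₂ ω, Y ω)) ℙ := by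
    rw [hY]
    exact hX.map_fun (snd.prod (α₁ • fst + α₂ • snd))
  rw [hA, integral_cond_qSet_of_hasGaussianLaw h₁ hX₁ hYm hVarYpos ha hab hb,
    integral_cond_qSet_of_hasGaussianLaw h₂ hX₂ hYm hVarYpos ha hab hb, hm₁, hm₂]
  exact ⟨rfl, rfl⟩
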